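/- arXiv:2211.01306 — 2 statements merged into one kernel-verified Lean document; each statement's English description precedes it below -/
import Mathlib

section
/- Let K ≥ 2 and β ∈ ℝ^K with all β_i > 0. The (K−1)-dimensional Lebesgue measure of the subregion S_{K,i} = {y ∈ S_K : y_i/β_i ≤ y_j/β_j for all j} of the simplex equals (β_i / ∑_{j=1}^K β_j) times the (K−1)-dimensional Lebesgue measure of S_K. Consequently, if Y is uniformly distributed on S_K, then P[Y_i/β_i = min(Y_1/β_1, …, Y_K/β_K)] = β_i / ∑_{j=1}^K β_j. -/
open MeasureTheory Finset

noncomputable def fillMap (K : ℕ) (u : Fin (K - 1) → ℝ) : Fin K → ℝ :=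
  fun i => if h : (i : ℕ) < K - 1 then u ⟨i, h⟩ else 1 - ∑ j, u j

/-- The `(K-1)`-dimensional Lebesgue measure on the probability simplex `S_K`. -/
noncomputable def simplexMeasure (K : ℕ) : Measure (Fin K → ℝ) :=
  Measure.map (fillMap K)
    (volume.restrict {u : Fin (K - 1) → ℝ | (∀ j, 0 ≤ u j) ∧ ∑ j, u j ≤ 1})

lemma fillMap_castSucc (n : ℕ) (u : Fin n → ℝ) (j : Fin n) :
    fillMap (n + 1) u j.castSucc = u j := by
  simp [fillMap]

lemma fillMap_last (n : ℕ) (u : Fin n → ℝ) :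
    fillMap (n + 1) u (Fin.last n) = 1 - ∑ j, u j := by
  simp [fillMap]

lemma fillMap_add (n : ℕ) (u : Fin n → ℝ) (t : ℝ) (W : Fin (n + 1) → ℝ) (hW : ∑ j, W j = 0)
    (j : Fin (n + 1)) :
    fillMap (n + 1) (u + t • fun k : Fin n => W k.castSucc) j = fillMap (n + 1) u j + t * W j := by
  rw [Fin.sum_univ_castSucc] at hW
  refine Fin.lastCases ?_ (fun k => ?_) j
  · rw [fillMap_last, fillMap_last]
    simp only [Pi.add_apply, Pi.smul_apply, smul_eq_mul, Finset.sum_add_distrib, ← Finset.mul_sum]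
    linear_combination (-t) * hW
  · rw [fillMap_castSucc, fillMap_castSucc]
    simp

lemma fillMap_linear (n : ℕ) (i : Fin (n + 1)) :
    ∃ l : (Fin n → ℝ) →ₗ[ℝ] ℝ, ∃ c : ℝ, ∀ u, fillMap (n + 1) u i = c + l u := by
  refine Fin.lastCases ?_ (fun k => ?_) i
  · refine ⟨-∑ j, LinearMap.proj j, 1, fun u => ?_⟩
    rw [fillMap_last]
    simp [LinearMap.sum_apply, sub_eq_add_neg]
  · refine ⟨LinearMap.proj k, 0, fun u => ?_⟩
    rw [fillMap_castSucc]; simp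

lemma measurable_fillMap (n : ℕ) : Measurable (fillMap (n + 1)) := by
  rw [measurable_pi_iff]
  intro i
  obtain ⟨l, c, h⟩ := fillMap_linear n i
  have : (fun u => fillMap (n + 1) u i) = fun u => c + l u := funext h
  rw [this]
  exact (l.continuous_of_finiteDimensional.measurable).const_add c

lemma fillMap_mem (n : ℕ) (u : Fin n → ℝ) :
    ((∀ j, 0 ≤ u j) ∧ ∑ j, u j ≤ 1) ↔ ∀ j, 0 ≤ fillMap (n + 1) u j := by
  rw [Fin.forall_fin_succ']
  simp only [fillMap_castSucc, fillMap_last, sub_nonneg]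

/-- The `(K-1)`-dimensional volume of the subregion
`S_{K,i} = {y ∈ S_K : y_i/β_i ≤ y_j/β_j for all j}` of the simplex is the fraction
`β_i / ∑_j β_j` of the volume of the whole simplex; equivalently, for `Y` uniform on
`S_K`, `P[Y_i/β_i = min_j (Y_j/β_j)] = β_i / ∑_j β_j`. -/
theorem simplex_subregion_volume
    (K : ℕ) (hK : 2 ≤ K) (β : Fin K → ℝ) (hβ : ∀ i, 0 < β i) (i : Fin K) :
    simplexMeasure K {y : Fin K → ℝ | ∀ j, y i / β i ≤ y j / β j}
      = ENNReal.ofReal (β i / ∑ j, β j) * simplexMeasure K Set.univ := by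
  obtain ⟨n, rfl⟩ : ∃ n, K = n + 1 := ⟨K - 1, by omega⟩
  have hmeas : MeasurableSet {y : Fin (n + 1) → ℝ | ∀ j, y i / β i ≤ y j / β j} := by
    rw [Set.ofPred_forall]
    exact MeasurableSet.iInter fun j =>
      measurableSet_le ((measurable_pi_apply i).div_const _) ((measurable_pi_apply j).div_const _)
  unfold simplexMeasure
  rw [Measure.map_apply (measurable_fillMap n) hmeas,
    Measure.map_apply (measurable_fillMap n) MeasurableSet.univ,
    Measure.restrict_apply (measurable_fillMap n hmeas), Set.preimage_univ,
    Measure.restrict_apply_univ]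
  change (volume : Measure (Fin n → ℝ)) (fillMap (n + 1) ⁻¹' _ ∩ {u : Fin n → ℝ | (∀ j, 0 ≤ u j) ∧ ∑ j, u j ≤ 1})
    = _ * (volume : Measure (Fin n → ℝ)) {u : Fin n → ℝ | (∀ j, 0 ≤ u j) ∧ ∑ j, u j ≤ 1}
  simp only [fillMap_mem]
  set B := ∑ j, β j with hB
  have hBpos : 0 < B := Finset.sum_pos (fun j _ => hβ j) ⟨i, Finset.mem_univ i⟩
  obtain ⟨W, hWdef⟩ : ∃ W : Fin (n + 1) → ℝ, W = fun j => β j / B - if j = i then 1 else 0 :=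
    ⟨_, rfl⟩
  have hWi : W i = β i / B - 1 := by simp [hWdef]
  have hWj : ∀ j, j ≠ i → W j = β j / B := fun j hj => by simp [hWdef, hj]
  have hW : ∑ j, W j = 0 := by
    simp only [hWdef, Finset.sum_sub_distrib, ← Finset.sum_div, ← hB]
    simp [hBpos.ne']
  obtain ⟨l, c, hl⟩ := fillMap_linear n i
  obtain ⟨w, hw⟩ : ∃ w : Fin n → ℝ, w = fun k => W k.castSucc := ⟨_, rfl⟩
  have hadd : ∀ (u : Fin n → ℝ) (t : ℝ) (j : Fin (n + 1)), fillMap (n + 1) (u + t • w) j = fillMap (n + 1) u j + t * W j := by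
    intro u t j; rw [hw]; exact fillMap_add n u t W hW j
  have hlw : l w = β i / B - 1 := by
    have h1 := hadd 0 1 i
    rw [hl, hl] at h1
    simp at h1
    rw [h1, hWi]
  set T : Set (Fin n → ℝ) := {u | ∀ j, 0 ≤ fillMap (n + 1) u j} with hT
  have himg : fillMap (n + 1) ⁻¹' {y : Fin (n + 1) → ℝ | ∀ j, y i / β i ≤ y j / β j} ∩ T
      = (fun x => x + c • w) '' (LinearMap.transvection l w '' T) := by
    rw [Set.image_image]
    have hF : ∀ u, LinearMap.transvection l w u + c • w = u + (fillMap (n + 1) u i) • w := by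
      intro u
      rw [LinearMap.transvection.apply, hl, add_smul]; abel
    simp only [hF]
    refine Set.ext fun (v : Fin n → ℝ) => ?_
    simp only [Set.mem_inter_iff, Set.mem_preimage, Set.mem_ofPred_eq, Set.mem_image, hT]
    constructor
    · rintro ⟨h1, h2⟩
      have hui : fillMap (n + 1) (v + (-(B * fillMap (n + 1) v i / β i)) • w) i
          = B * fillMap (n + 1) v i / β i := by
        rw [hadd, hWi]
        have := (hβ i).ne'
        field_simp
        ring
      refine ⟨v + (-(B * fillMap (n + 1) v i / β i)) • w, fun j => ?_, ?_⟩
      · by_cases hj : j = i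
        · subst hj
          rw [hui]
          have := h2 j
          have := hβ j
          positivity
        · rw [hadd, hWj j hj]
          have h3 := h1 j
          rw [le_div_iff₀ (hβ j)] at h3
          have : B * fillMap (n + 1) v i / β i * (β j / B) = fillMap (n + 1) v i / β i * β j := by
            field_simp
          linarith
      · rw [hui, add_assoc, ← add_smul]; simp
    · rintro ⟨u, hu, rfl⟩
      have hi : fillMap (n + 1) (u + fillMap (n + 1) u i • w) i
          = fillMap (n + 1) u i * (β i / B) := by
        rw [hadd, hWi]; ring
      have hj : ∀ j, j ≠ i → fillMap (n + 1) (u + fillMap (n + 1) u i • w) j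
          = fillMap (n + 1) u j + fillMap (n + 1) u i * (β j / B) := by
        intro j hj
        rw [hadd, hWj j hj]
      refine ⟨fun j => ?_, fun j => ?_⟩
      · by_cases h : j = i
        · rw [h]
        · rw [hi, hj j h, add_div]
          have e1 : fillMap (n + 1) u i * (β i / B) / β i = fillMap (n + 1) u i / B := by
            have := (hβ i).ne'
            field_simp
          have e2 : fillMap (n + 1) u i * (β j / B) / β j = fillMap (n + 1) u i / B := by
            have := (hβ j).ne'
            field_simp
          rw [e1, e2]
          have := div_nonneg (hu j) (hβ j).le
          linarith
      · have a := hu i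
        have b := hu j
        have d := hβ j
        by_cases h : j = i
        · subst h
          rw [hi]; positivity
        · rw [hj j h]; positivity
  rw [himg, Set.image_add_right, measure_preimage_add_right, Measure.addHaar_image_linearMap,
    LinearMap.transvection.det, hlw]
  have : 0 < β i / B := div_pos (hβ i) hBpos
  rw [show 1 + (β i / B - 1) = β i / B by ring, abs_of_pos this]
end

section
/- Let K ≥ 2, τ > 0, α ∈ ℝ^K with all α_i > 0, and β ∈ ℝ^K with all β_i > 0, and let X have the inverse Schlömilch distribution IS(α, β, τ). Then for all indices i, k, the log-ratio mean satisfies E[log(X_i/X_k)] = (1/τ)[−ψ(α_i) + ψ(α_k) + log(β_i/β_k)], where ψ(x) = Γ'(x)/Γ(x) is the digamma function. -/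
open MeasureTheory Finset

/-- The density of the inverse Schlömilch distribution `IS(α, β, τ)` on the simplex. -/
noncomputable def isDensity (K : ℕ) (α β : Fin K → ℝ) (τ : ℝ) (x : Fin K → ℝ) : ℝ :=
  τ ^ (K - 1) * Real.Gamma (∑ i, α i) * (∑ j, β j / x j ^ τ) ^ (-(∑ i, α i)) *
    ∏ i, β i ^ (α i) / (Real.Gamma (α i) * x i ^ (τ * α i + 1))

/-- The digamma function `ψ = Γ'/Γ`. -/
noncomputable def digamma (x : ℝ) : ℝ := deriv Real.Gamma x / Real.Gamma x

open Real in
lemma log_gamma_integrable {a : ℝ} (ha : 0 < a) :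
    IntegrableOn (fun t : ℝ => Real.log t * (Real.exp (-t) * t ^ (a - 1))) (Set.Ioi 0) ∧
    ∫ t in Set.Ioi (0:ℝ), Real.log t * (Real.exp (-t) * t ^ (a - 1)) = deriv Real.Gamma a := by
  have hs : 0 < ((a : ℂ)).re := by simpa using ha
  have key := mellin_hasDerivAt_of_isBigO_rpow (E := ℂ) (f := fun t : ℝ => ((Real.exp (-t) : ℝ) : ℂ))
    (s := (a : ℂ)) (a := (a : ℂ).re + 1) (b := 0) ?_ ?_ (lt_add_one _) ?_ hs
  · obtain ⟨h1, -⟩ := key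
    have hcongr : ∀ t ∈ Set.Ioi (0:ℝ), ((t : ℂ) ^ ((a : ℂ) - 1) * (Real.log t * Real.exp (-t)) : ℂ)
        = ((Real.log t * (Real.exp (-t) * t ^ (a - 1)) : ℝ) : ℂ) := by
      intro t ht
      have : (t : ℂ) ^ ((a : ℂ) - 1) = ((t ^ (a - 1) : ℝ) : ℂ) := by
        rw [Complex.ofReal_cpow (le_of_lt ht)]; simp
      rw [this]; push_cast; ring
    constructor
    · have h2 : IntegrableOn (fun t : ℝ =>
          ((Real.log t * (Real.exp (-t) * t ^ (a - 1)) : ℝ) : ℂ)) (Set.Ioi 0) := by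
        refine IntegrableOn.congr_fun h1 (fun t ht => ?_) measurableSet_Ioi
        rw [← hcongr t ht]
        simp
      have h7 := h2.re
      exact h7
    · have h3 := Complex.hasDerivAt_GammaIntegral hs
      have h4 : HasDerivAt Complex.Gamma (((∫ t in Set.Ioi (0:ℝ),
          Real.log t * (Real.exp (-t) * t ^ (a - 1)) : ℝ)) : ℂ) (a : ℂ) := by
        rw [setIntegral_congr_fun measurableSet_Ioi hcongr, integral_complex_ofReal] at h3
        refine h3.congr_of_eventuallyEq ?_
        have ho : IsOpen {z : ℂ | 0 < z.re} := isOpen_lt continuous_const Complex.continuous_re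
        filter_upwards [ho.mem_nhds hs] with z hz using Complex.Gamma_eq_integral hz
      have h5 := h4.real_of_complex
      have h6 : (fun x : ℝ => (Complex.Gamma x).re) = Real.Gamma := by
        ext x; rfl
      rw [h6, Complex.ofReal_re] at h5
      exact h5.deriv.symm
  · refine (Continuous.continuousOn ?_).locallyIntegrableOn measurableSet_Ioi
    exact Complex.continuous_ofReal.comp (Real.continuous_exp.comp continuous_neg)
  · rw [← Asymptotics.isBigO_norm_left]
    simp_rw [Complex.norm_real, Asymptotics.isBigO_norm_left]
    simpa only [neg_one_mul] using (isLittleO_exp_neg_mul_rpow_atTop zero_lt_one _).isBigO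
  · simp_rw [neg_zero, Real.rpow_zero]
    refine Asymptotics.isBigO_const_of_tendsto (?_ : Filter.Tendsto _ _ (nhds (1 : ℂ))) one_ne_zero
    rw [(by simp : (1 : ℂ) = Real.exp (-0))]
    exact (Complex.continuous_ofReal.comp
      (Real.continuous_exp.comp continuous_neg)).continuousWithinAt

lemma measurable_fillMap_s5 (K : ℕ) : Measurable (fillMap K) := by
  refine measurable_pi_lambda _ fun i => ?_
  unfold fillMap
  split_ifs <;> fun_prop

lemma fillMap_smul (n : ℕ) (r : ℝ) (u : Fin n → ℝ) :
    (Fin.last n).insertNth (α := fun _ => ℝ) (r - ∑ j, (r • u) j) (r • u)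
      = r • fillMap (n + 1) u := by
  ext i
  refine Fin.lastCases ?_ (fun j => ?_) i
  · simp [fillMap, mul_sub, Finset.mul_sum]
  · rw [← Fin.succAbove_last_apply, Fin.insertNth_apply_succAbove]
    simp [fillMap]

lemma lintegral_polar (n : ℕ) (f : (Fin (n + 1) → ℝ) → ENNReal) (hf : Measurable f) :
    ∫⁻ z, f z = ∫⁻ r : ℝ, ∫⁻ u : Fin n → ℝ,
      ENNReal.ofReal (|r| ^ n) * f (r • fillMap (n + 1) u) := by
  have hmp := (volume_preserving_piFinSuccAbove (fun _ : Fin (n + 1) => ℝ) (Fin.last n)).symm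
  have hins : Measurable (fun p : ℝ × (Fin n → ℝ) =>
      ((Fin.last n).insertNth (α := fun _ => ℝ) p.1 p.2 : Fin (n + 1) → ℝ)) := hmp.measurable
  have hg : Measurable (fun p : ℝ × (Fin n → ℝ) =>
      f ((Fin.last n).insertNth (α := fun _ => ℝ) (p.1 - ∑ j, p.2 j) p.2)) :=
    hf.comp (hins.comp (f := fun p : ℝ × (Fin n → ℝ) => (p.1 - ∑ j, p.2 j, p.2)) (by fun_prop))
  calc ∫⁻ z, f z = ∫⁻ p : ℝ × (Fin n → ℝ), f ((Fin.last n).insertNth (α := fun _ => ℝ) p.1 p.2) :=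
        (hmp.lintegral_comp hf).symm
    _ = ∫⁻ w : Fin n → ℝ, ∫⁻ t : ℝ, f ((Fin.last n).insertNth (α := fun _ => ℝ) t w) := by
        exact lintegral_prod_symm _ (hf.comp hins).aemeasurable
    _ = ∫⁻ w : Fin n → ℝ, ∫⁻ r : ℝ,
          f ((Fin.last n).insertNth (α := fun _ => ℝ) (r - ∑ j, w j) w) := by
        congr 1; ext w
        exact (lintegral_sub_right_eq_self (fun t => f ((Fin.last n).insertNth (α := fun _ => ℝ) t w))
          (∑ j, w j)).symm
    _ = ∫⁻ r : ℝ, ∫⁻ w : Fin n → ℝ,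
          f ((Fin.last n).insertNth (α := fun _ => ℝ) (r - ∑ j, w j) w) := by
        refine lintegral_lintegral_swap ?_
        exact (hg.comp measurable_swap).aemeasurable
    _ = _ := by
        refine lintegral_congr_ae ?_
        have h0 : ∀ᵐ r : ℝ, r ≠ 0 := by simp [ae_iff, measure_singleton]
        filter_upwards [h0] with r hr
        have hgr : Measurable (fun w : Fin n → ℝ =>
            f ((Fin.last n).insertNth (α := fun _ => ℝ) (r - ∑ j, w j) w)) :=
          hg.comp (f := fun w : Fin n → ℝ => (r, w)) (by fun_prop)
        have h := Measure.map_addHaar_smul (volume : Measure (Fin n → ℝ)) hr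
        have h2 := congrArg (fun μ : Measure (Fin n → ℝ) => ∫⁻ w,
          f ((Fin.last n).insertNth (α := fun _ => ℝ) (r - ∑ j, w j) w) ∂μ) h
        simp only [lintegral_smul_measure, smul_eq_mul] at h2
        rw [lintegral_map hgr (by fun_prop)] at h2
        simp only [fillMap_smul, Module.finrank_fin_fun] at h2
        rw [lintegral_const_mul' _ _ ENNReal.ofReal_ne_top, h2, ← mul_assoc,
          ← ENNReal.ofReal_mul (by positivity), abs_inv, abs_pow, mul_inv_cancel₀ (by positivity)]
        simp

lemma polar_map (n : ℕ) :
    Measure.map (fun p : ℝ × (Fin n → ℝ) => p.1 • fillMap (n + 1) p.2)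
      ((volume : Measure (ℝ × (Fin n → ℝ))).withDensity
        (fun p => ENNReal.ofReal (|p.1| ^ n))) = volume := by
  have hm : Measurable (fun p : ℝ × (Fin n → ℝ) => p.1 • fillMap (n + 1) p.2) :=
    measurable_fst.smul ((measurable_fillMap_s5 (n + 1)).comp measurable_snd)
  refine Measure.ext_of_lintegral _ fun f hf => ?_
  have e := lintegral_withDensity_eq_lintegral_mul (volume : Measure (ℝ × (Fin n → ℝ)))
    (f := fun p => ENNReal.ofReal (|p.1| ^ n)) (by fun_prop) (hf.comp hm)
  simp only [Function.comp_def] at e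
  rw [lintegral_map hf hm, e,
    lintegral_polar n f hf, Measure.volume_eq_prod, lintegral_prod]
  · rfl
  · exact Measurable.aemeasurable (Measurable.mul (by fun_prop) (hf.comp hm))

/-- Polar integration for integrable functions. -/
lemma integral_polar (n : ℕ) (G : (Fin (n + 1) → ℝ) → ℝ) (hG : Integrable G) :
    ∫ z, G z = ∫ u : Fin n → ℝ, ∫ r : ℝ, |r| ^ n * G (r • fillMap (n + 1) u) := by
  have hm : Measurable (fun p : ℝ × (Fin n → ℝ) => p.1 • fillMap (n + 1) p.2) :=
    measurable_fst.smul ((measurable_fillMap_s5 (n + 1)).comp measurable_snd)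
  have hG' := hG
  rw [← polar_map n] at hG'
  have hI := (integrable_map_measure hG'.aestronglyMeasurable hm.aemeasurable).1 hG'
  rw [integrable_withDensity_iff_integrable_smul' (by fun_prop) (by simp)] at hI
  simp only [Function.comp_def] at hI
  conv_lhs => rw [← polar_map n]
  rw [integral_map hm.aemeasurable hG'.aestronglyMeasurable,
    integral_withDensity_eq_integral_toReal_smul (by fun_prop) (by simp),
    Measure.volume_eq_prod, integral_prod_symm _ hI]
  congr 1; ext u; congr 1; ext r
  simp

/-- Density of the inverse generalized Gamma variable. -/
noncomputable def hd (a b τ z : ℝ) : ℝ :=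
  (Set.Ioi (0:ℝ)).indicator
    (fun z => τ * b ^ a * z ^ (-(τ * a) - 1) * Real.exp (-(b * z ^ (-τ))) / Real.Gamma a) z

lemma hd_nonpos {a b τ z : ℝ} (hz : z ≤ 0) : hd a b τ z = 0 := by
  unfold hd
  rw [Set.indicator_of_notMem (by simpa using hz)]

lemma hd_pos {a b τ z : ℝ} (hz : 0 < z) : hd a b τ z =
    τ * b ^ a * z ^ (-(τ * a) - 1) * Real.exp (-(b * z ^ (-τ))) / Real.Gamma a := by
  unfold hd
  rw [Set.indicator_of_mem (by simpa using hz)]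

lemma cov {b τ : ℝ} (hb : 0 < b) (hτ : 0 < τ) (F : ℝ → ℝ) (hF : IntegrableOn F (Set.Ioi 0)) :
    IntegrableOn (fun z => τ * z ^ (-τ - 1) * (b * F (b * z ^ (-τ)))) (Set.Ioi 0) ∧
    ∫ z in Set.Ioi (0:ℝ), τ * z ^ (-τ - 1) * (b * F (b * z ^ (-τ))) = ∫ y in Set.Ioi (0:ℝ), F y := by
  have hp : -τ ≠ 0 := by linarith
  have habs : |(-τ)| = τ := by rw [abs_neg, abs_of_pos hτ]
  have h1 : IntegrableOn (fun y => b * F (b * y)) (Set.Ioi 0) := by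
    have := (integrableOn_Ioi_comp_mul_left_iff F 0 hb).2 (by simpa using hF)
    exact this.const_mul b
  have h2 := (integrableOn_Ioi_comp_rpow_iff (fun y => b * F (b * y)) hp).2 h1
  have h3 := integral_comp_rpow_Ioi (fun y => b * F (b * y)) hp
  rw [habs] at h2 h3
  refine ⟨h2, h3.trans ?_⟩
  have h4 := integral_comp_mul_left_Ioi' F 0 hb
  rw [mul_zero] at h4
  rw [integral_const_mul]
  exact h4

lemma hd_eq {a b τ z : ℝ} (hb : 0 < b) (hz : 0 < z) : hd a b τ z =
    τ * z ^ (-τ - 1) * (b * ((Real.exp (-(b * z ^ (-τ))) * (b * z ^ (-τ)) ^ (a - 1)) /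
      Real.Gamma a)) := by
  rw [hd_pos hz, Real.mul_rpow hb.le (by positivity), ← Real.rpow_mul hz.le]
  have e1 : z ^ (-(τ * a) - 1) = z ^ (-τ - 1) * z ^ (-τ * (a - 1)) := by
    rw [← Real.rpow_add hz]; congr 1; ring
  have e2 : b ^ a = b * b ^ (a - 1) := by
    nth_rewrite 2 [← Real.rpow_one b]
    rw [← Real.rpow_add hb]
    congr 1; ring
  rw [e1, e2]; ring

lemma hd_integral {a b τ : ℝ} (ha : 0 < a) (hb : 0 < b) (hτ : 0 < τ) :
    Integrable (hd a b τ) ∧ ∫ z, hd a b τ z = 1 := by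
  have hG : Real.Gamma a ≠ 0 := (Real.Gamma_pos_of_pos ha).ne'
  obtain ⟨h1, h2⟩ := cov hb hτ (fun y => (Real.exp (-y) * y ^ (a - 1)) / Real.Gamma a)
    ((Real.GammaIntegral_convergent ha).div_const _)
  have hc : ∀ z ∈ Set.Ioi (0:ℝ), τ * z ^ (-τ - 1) * (b * ((Real.exp (-(b * z ^ (-τ))) *
      (b * z ^ (-τ)) ^ (a - 1)) / Real.Gamma a)) = hd a b τ z := fun z hz => (hd_eq hb hz).symm
  have h0 : (Set.Ioi (0:ℝ)).indicator (hd a b τ) = hd a b τ := by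
    ext z; unfold hd; simp [Set.indicator_indicator]
  constructor
  · rw [← h0, integrable_indicator_iff measurableSet_Ioi]
    exact h1.congr_fun hc measurableSet_Ioi
  · rw [← h0, integral_indicator measurableSet_Ioi, ← setIntegral_congr_fun measurableSet_Ioi hc, h2,
      integral_div, ← Real.Gamma_eq_integral ha, div_self hG]

lemma log_hd_integral {a b τ : ℝ} (ha : 0 < a) (hb : 0 < b) (hτ : 0 < τ) :
    Integrable (fun z => Real.log z * hd a b τ z) ∧
    ∫ z, Real.log z * hd a b τ z = (1 / τ) * (Real.log b - digamma a) := by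
  have hG : Real.Gamma a ≠ 0 := (Real.Gamma_pos_of_pos ha).ne'
  obtain ⟨g1, g2⟩ := log_gamma_integrable ha
  obtain ⟨h1, h2⟩ := cov hb hτ
    (fun y => (Real.log y * (Real.exp (-y) * y ^ (a - 1))) / Real.Gamma a) (g1.div_const _)
  obtain ⟨i1, i2⟩ := hd_integral ha hb hτ
  have hc : ∀ z ∈ Set.Ioi (0:ℝ), τ * z ^ (-τ - 1) * (b * ((Real.log (b * z ^ (-τ)) *
      (Real.exp (-(b * z ^ (-τ))) * (b * z ^ (-τ)) ^ (a - 1))) / Real.Gamma a))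
      = Real.log (b * z ^ (-τ)) * hd a b τ z := fun z hz => by
    rw [hd_eq hb hz]; ring
  have h0 : (Set.Ioi (0:ℝ)).indicator (fun z => Real.log (b * z ^ (-τ)) * hd a b τ z)
      = fun z => Real.log (b * z ^ (-τ)) * hd a b τ z := by
    ext z
    by_cases hz : 0 < z
    · simp [hz]
    · simp [hz, hd_nonpos (not_lt.1 hz)]
  have j1 : Integrable (fun z => Real.log (b * z ^ (-τ)) * hd a b τ z) := by
    rw [← h0, integrable_indicator_iff measurableSet_Ioi]
    exact h1.congr_fun hc measurableSet_Ioi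
  have j2 : ∫ z, Real.log (b * z ^ (-τ)) * hd a b τ z = digamma a := by
    rw [← h0, integral_indicator measurableSet_Ioi, ← setIntegral_congr_fun measurableSet_Ioi hc, h2,
      integral_div, g2, digamma]
  have he : (fun z => Real.log z * hd a b τ z) = fun z => (1 / τ) * (Real.log b * hd a b τ z -
      Real.log (b * z ^ (-τ)) * hd a b τ z) := by
    ext z
    by_cases hz : 0 < z
    · rw [Real.log_mul hb.ne' (by positivity), Real.log_rpow hz]
      field_simp
      ring
    · simp [hd_nonpos (not_lt.1 hz)]
  rw [he]
  refine ⟨((i1.const_mul _).sub j1).const_mul _, ?_⟩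
  rw [integral_const_mul, integral_sub (i1.const_mul _) j1, integral_const_mul, i2, j2, mul_one]

lemma log_prod {n : ℕ} {τ : ℝ} (hτ : 0 < τ) {α β : Fin n → ℝ} (hα : ∀ i, 0 < α i)
    (hβ : ∀ i, 0 < β i) (i : Fin n) :
    Integrable (fun z : Fin n → ℝ => Real.log (z i) * ∏ j, hd (α j) (β j) τ (z j)) ∧
    ∫ z : Fin n → ℝ, Real.log (z i) * ∏ j, hd (α j) (β j) τ (z j)
      = (1 / τ) * (Real.log (β i) - digamma (α i)) := by
  obtain ⟨f, hf⟩ : ∃ f : Fin n → ℝ → ℝ, f = fun (j : Fin n) (t : ℝ) =>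
        (if j = i then Real.log t else 1) * hd (α j) (β j) τ t := ⟨_, rfl⟩
  have he : (fun z : Fin n → ℝ => Real.log (z i) * ∏ j, hd (α j) (β j) τ (z j))
      = fun z => ∏ j, f j (z j) := by
    ext z
    simp only [hf]
    rw [Finset.prod_mul_distrib, Finset.prod_ite_eq']
    simp
  rw [he]
  constructor
  · refine Integrable.fintype_prod (f := f) (μ := fun _ => volume) (fun j => ?_)
    rw [hf]
    by_cases hj : j = i
    · simpa [hj] using (log_hd_integral (hα i) (hβ i) hτ).1
    · simpa [hj] using (hd_integral (hα j) (hβ j) hτ).1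
  · rw [integral_fintype_prod_volume_eq_prod, Finset.prod_eq_single i]
    · simpa [hf] using (log_hd_integral (hα i) (hβ i) hτ).2
    · intro j _ hj
      rw [hf]
      simpa [hj] using (hd_integral (hα j) (hβ j) hτ).2
    · simp

lemma prod_hd {n : ℕ} {τ r : ℝ} {α β x : Fin n → ℝ} (hr : 0 < r) (hx : ∀ i, 0 < x i) :
    ∏ j, hd (α j) (β j) τ ((r • x) j) =
      τ ^ n * (∏ j, β j ^ (α j) / (Real.Gamma (α j) * x j ^ (τ * α j + 1))) *
      r ^ (-(τ * ∑ j, α j) - n) * Real.exp (-((∑ j, β j / x j ^ τ) * r ^ (-τ))) := by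
  have h : ∀ j, hd (α j) (β j) τ ((r • x) j) =
      τ * (β j ^ (α j) / (Real.Gamma (α j) * x j ^ (τ * α j + 1))) * r ^ (-(τ * α j) - 1) *
        Real.exp (-((β j / x j ^ τ) * r ^ (-τ))) := by
    intro j
    have hxj := hx j
    rw [Pi.smul_apply, smul_eq_mul, hd_pos (by positivity), Real.mul_rpow hr.le hxj.le,
      Real.mul_rpow hr.le hxj.le, Real.rpow_neg hxj.le τ,
      show x j ^ (-(τ * α j) - 1) = (x j ^ (τ * α j + 1))⁻¹ by
        rw [← Real.rpow_neg hxj.le]; congr 1; ring]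
    rw [show β j * (r ^ (-τ) * (x j ^ τ)⁻¹) = β j / x j ^ τ * r ^ (-τ) by ring]
    ring
  simp_rw [h]
  rw [Finset.prod_mul_distrib, Finset.prod_mul_distrib, Finset.prod_mul_distrib, Finset.prod_const,
    Finset.card_univ, Fintype.card_fin, ← Real.exp_sum, ← Real.rpow_sum_of_pos hr]
  congr 2
  · congr 1; simp [Finset.sum_sub_distrib, Finset.mul_sum]
  · simp [Finset.sum_mul]

lemma inner_zero {n : ℕ} {τ : ℝ} {α β x : Fin n → ℝ} (hs : ∑ j, x j = 1)
    (hx : ¬ ∀ i, 0 < x i) (r : ℝ) : ∏ j, hd (α j) (β j) τ ((r • x) j) = 0 := by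
  push Not at hx
  obtain ⟨i, hi⟩ := hx
  rw [Finset.prod_eq_zero_iff]
  rcases le_or_gt r 0 with hr | hr
  · obtain ⟨l, -, hl⟩ : ∃ l ∈ Finset.univ, 0 < x l :=
      Finset.exists_lt_of_sum_lt (f := fun _ => (0:ℝ)) (by simp [hs])
    exact ⟨l, Finset.mem_univ _, hd_nonpos (mul_nonpos_of_nonpos_of_nonneg hr hl.le)⟩
  · exact ⟨i, Finset.mem_univ _, hd_nonpos (mul_nonpos_of_nonneg_of_nonpos hr.le hi)⟩

lemma inner_pos {n : ℕ} {τ : ℝ} (hτ : 0 < τ) {α β x : Fin (n + 1) → ℝ} (hα : ∀ i, 0 < α i)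
    (hβ : ∀ i, 0 < β i) (hx : ∀ i, 0 < x i) (i k : Fin (n + 1)) :
    ∫ r : ℝ, |r| ^ n * (Real.log ((r • x) i) * ∏ j, hd (α j) (β j) τ ((r • x) j)
        - Real.log ((r • x) k) * ∏ j, hd (α j) (β j) τ ((r • x) j))
      = Real.log (x i / x k) * isDensity (n + 1) α β τ x := by
  have hA : 0 < ∑ j, α j := Finset.sum_pos (fun j _ => hα j) Finset.univ_nonempty
  have hS : 0 < ∑ j, β j / x j ^ τ :=
    Finset.sum_pos (fun j _ => div_pos (hβ j) (Real.rpow_pos_of_pos (hx j) _)) Finset.univ_nonempty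
  have hG : Real.Gamma (∑ j, α j) ≠ 0 := (Real.Gamma_pos_of_pos hA).ne'
  have he : ∀ r : ℝ, |r| ^ n * (Real.log ((r • x) i) * ∏ j, hd (α j) (β j) τ ((r • x) j)
        - Real.log ((r • x) k) * ∏ j, hd (α j) (β j) τ ((r • x) j))
      = Real.log (x i / x k) * isDensity (n + 1) α β τ x *
        hd (∑ j, α j) (∑ j, β j / x j ^ τ) τ r := by
    intro r
    rcases le_or_gt r 0 with hr | hr
    · rw [Finset.prod_eq_zero (Finset.mem_univ i)
        (hd_nonpos (mul_nonpos_of_nonpos_of_nonneg hr (hx i).le)), hd_nonpos hr]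
      simp
    · rw [prod_hd hr hx, hd_pos hr, isDensity, abs_of_pos hr, Pi.smul_apply, Pi.smul_apply,
        smul_eq_mul, smul_eq_mul, Real.log_mul hr.ne' (hx i).ne', Real.log_mul hr.ne' (hx k).ne',
        Real.log_div (hx i).ne' (hx k).ne', Real.rpow_neg hS.le, Nat.add_sub_cancel,
        show r ^ (-(τ * ∑ j, α j) - 1) = r ^ n * r ^ (-(τ * ∑ j, α j) - ((n + 1 : ℕ) : ℝ)) by
          rw [← Real.rpow_natCast, ← Real.rpow_add hr]; congr 1; push_cast; ring]
      have hS' : (∑ j, β j / x j ^ τ) ^ (∑ j, α j) ≠ 0 := (Real.rpow_pos_of_pos hS _).ne'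
      generalize (∑ j, β j / x j ^ τ) ^ (∑ j, α j) = q at *
      generalize (∏ j, β j ^ (α j) / (Real.Gamma (α j) * x j ^ (τ * α j + 1))) = P at *
      field_simp
      ring
  simp_rw [he]
  rw [integral_const_mul, (hd_integral hA hS hτ).2, mul_one]

lemma isDensity_zero {n : ℕ} {τ : ℝ} (hτ : 0 < τ) {α β x : Fin n → ℝ} (hα : ∀ i, 0 < α i)
    (i : Fin n) (hi : x i = 0) : isDensity n α β τ x = 0 := by
  have : τ * α i + 1 ≠ 0 := by have := mul_pos hτ (hα i); positivity
  rw [isDensity, Finset.prod_eq_zero (Finset.mem_univ i), mul_zero]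
  rw [hi, Real.zero_rpow this]
  simp

lemma fillMap_sum (n : ℕ) (u : Fin n → ℝ) : ∑ j, fillMap (n + 1) u j = 1 := by
  rw [Fin.sum_univ_castSucc]
  simp [fillMap]

lemma fillMap_nonneg_iff (n : ℕ) (u : Fin n → ℝ) :
    (∀ j, 0 ≤ fillMap (n + 1) u j) ↔ (∀ j, 0 ≤ u j) ∧ ∑ j, u j ≤ 1 := by
  rw [Fin.forall_fin_succ']
  simp [fillMap]

/-- Log-ratio means of the inverse Schlömilch distribution:
`E[log(X_i/X_k)] = (1/τ)[−ψ(α_i) + ψ(α_k) + log(β_i/β_k)]`. -/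
theorem is_log_ratio_mean
    (K : ℕ) (hK : 2 ≤ K) (τ : ℝ) (hτ : 0 < τ)
    (α β : Fin K → ℝ) (hα : ∀ i, 0 < α i) (hβ : ∀ i, 0 < β i) (i k : Fin K) :
    ∫ x, Real.log (x i / x k) * isDensity K α β τ x ∂(simplexMeasure K)
      = (1 / τ) * (-digamma (α i) + digamma (α k) + Real.log (β i / β k)) := by
  obtain ⟨n, rfl⟩ : ∃ n, K = n + 1 := ⟨K - 1, by omega⟩
  obtain ⟨i1, i2⟩ := log_prod hτ hα hβ i
  obtain ⟨k1, k2⟩ := log_prod hτ hα hβ k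
  have hp := integral_polar n _ (i1.sub k1)
  simp only [Pi.sub_apply] at hp
  rw [integral_sub i1 k1, i2, k2] at hp
  have hmeas : Measurable (fun x : Fin (n + 1) → ℝ =>
      Real.log (x i / x k) * isDensity (n + 1) α β τ x) := by
    unfold isDensity
    fun_prop
  have hset : MeasurableSet {u : Fin n → ℝ | (∀ j, 0 ≤ u j) ∧ ∑ j, u j ≤ 1} := by
    measurability
  have hmain : ∫ x, Real.log (x i / x k) * isDensity (n + 1) α β τ x ∂(simplexMeasure (n + 1))
      = ∫ u in {u : Fin n → ℝ | (∀ j, 0 ≤ u j) ∧ ∑ j, u j ≤ 1},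
        Real.log (fillMap (n + 1) u i / fillMap (n + 1) u k) *
          isDensity (n + 1) α β τ (fillMap (n + 1) u) := by
    unfold simplexMeasure
    exact integral_map (measurable_fillMap_s5 (n + 1)).aemeasurable hmeas.aestronglyMeasurable
  rw [hmain, ← integral_indicator hset]
  have : ∀ u : Fin n → ℝ, ({u : Fin n → ℝ | (∀ j, 0 ≤ u j) ∧ ∑ j, u j ≤ 1}.indicator (fun u =>
        Real.log (fillMap (n + 1) u i / fillMap (n + 1) u k) *
          isDensity (n + 1) α β τ (fillMap (n + 1) u))) u =
      ∫ r : ℝ, |r| ^ n * (Real.log ((r • fillMap (n + 1) u) i) *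
          ∏ j, hd (α j) (β j) τ ((r • fillMap (n + 1) u) j)
        - Real.log ((r • fillMap (n + 1) u) k) *
          ∏ j, hd (α j) (β j) τ ((r • fillMap (n + 1) u) j)) := by
    intro u
    by_cases hx : ∀ j, 0 < fillMap (n + 1) u j
    · have hu : u ∈ {u : Fin n → ℝ | (∀ j, 0 ≤ u j) ∧ ∑ j, u j ≤ 1} :=
        (fillMap_nonneg_iff n u).1 fun j => (hx j).le
      rw [Set.indicator_of_mem hu]
      exact (inner_pos hτ hα hβ hx i k).symm
    · simp_rw [inner_zero (fillMap_sum n u) hx]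
      simp only [mul_zero, sub_zero, integral_zero]
      by_cases hu : u ∈ {u : Fin n → ℝ | (∀ j, 0 ≤ u j) ∧ ∑ j, u j ≤ 1}
      · rw [Set.indicator_of_mem hu]
        have hnn := (fillMap_nonneg_iff n u).2 hu
        push Not at hx
        obtain ⟨l, hl⟩ := hx
        rw [isDensity_zero hτ hα l (le_antisymm hl (hnn l)), mul_zero]
      · rw [Set.indicator_of_notMem hu]
  rw [integral_congr_ae (Filter.Eventually.of_forall this), ← hp,
    Real.log_div (hβ i).ne' (hβ k).ne']
  ring
end
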